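/- Weight-2 component of the commutator (second equation of (29)). Fix a natural number n ≥ 1. For a matrix X indexed by (Fin n → Fin 2) and a natural number w, define its weight-w component X_w = ∑ over a : Fin n → Fin 4 with weight a = w of ((2:ℂ)^(-n) * trace (P a * X)) • P a. Let A lie in the span of Pauli strings with weight in {1, 2} and let B lie in the span of Pauli strings with weight in {0} ∪ {w | w ≥ 3}. Then for every c : Fin n → Fin 4 with weight c = 2, trace (P c * (A * B - B * A)) = trace (P c * (A_2 * B_3 - B_3 * A_2)), where A_2 is the weight-2 component of A and B_3 is the weight-3 component of B. -/

import Mathlib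

/-!
Both sides are bilinear in `(A, B)`, and `weightComponent` is the projection onto the Pauli strings
of the given weight because Pauli strings are orthogonal for the trace form
(`weightComponent_pauliString`). So it suffices to take `A = P a`, `B = P b`, and to show that
`Tr (P c [P a, P b])` vanishes unless `a` has weight `2` and `b` has weight `3`.

The trace factorises over the sites: `Tr (P c P a P b) = ∏ i, Tr (σ (c i) σ (a i) σ (b i))`.
A factor vanishes where `b i` is the only nontrivial letter, so a nonzero product puts the support
of `b` inside the union of the supports of `a` and `c`. If the two orderings of `a` and `b`
contribute differently, then at some site all three letters are nontrivial. Counting gives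
`wt b + 1 ≤ wt a + wt c` together with `wt b ≠ 0` (`weight_bound`), and with `wt c = 2`,
`wt a ≤ 2`, `wt b ∈ {0} ∪ [3, ∞)` this forces `wt a = 2` and `wt b = 3`.
-/

open Matrix

/-- The four `2 × 2` Pauli matrices: `σ₀ = 1`, `σ₁ = σ_x`, `σ₂ = σ_y`, `σ₃ = σ_z`. -/
noncomputable def pauli : Fin 4 → Matrix (Fin 2) (Fin 2) ℂ
  | 0 => 1
  | 1 => !![0, 1; 1, 0]
  | 2 => !![0, -Complex.I; Complex.I, 0]
  | 3 => !![1, 0; 0, -1]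

/-- The Pauli string `P a`, the `n`-fold Kronecker product of the matrices `σ (a i)`. -/
noncomputable def pauliString {n : ℕ} (a : Fin n → Fin 4) :
    Matrix (Fin n → Fin 2) (Fin n → Fin 2) ℂ :=
  Matrix.of fun x y => ∏ i, pauli (a i) (x i) (y i)

/-- The weight of a Pauli string label: the number of non-identity tensor factors. -/
def pauliWeight {n : ℕ} (a : Fin n → Fin 4) : ℕ :=
  (Finset.univ.filter fun i => a i ≠ 0).card

/-- The span of the Pauli strings whose weight lies in the set `S`. -/
noncomputable def pauliSpan (n : ℕ) (S : Set ℕ) :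
    Submodule ℂ (Matrix (Fin n → Fin 2) (Fin n → Fin 2) ℂ) :=
  Submodule.span ℂ {M | ∃ a : Fin n → Fin 4, pauliWeight a ∈ S ∧ pauliString a = M}

/-- The weight-`w` component of a matrix `X`:
`X_w = ∑_{weight a = w} 2⁻ⁿ Tr (P a * X) • P a`. -/
noncomputable def weightComponent {n : ℕ} (X : Matrix (Fin n → Fin 2) (Fin n → Fin 2) ℂ)
    (w : ℕ) : Matrix (Fin n → Fin 2) (Fin n → Fin 2) ℂ :=
  ∑ a ∈ Finset.univ.filter fun a : Fin n → Fin 4 => pauliWeight a = w,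
    ((2 : ℂ) ^ (-(n : ℤ)) * (pauliString a * X).trace) • pauliString a

/-- The `n`-fold Kronecker product of a family of `2 × 2` matrices. -/
noncomputable def kron {n : ℕ} (M : Fin n → Matrix (Fin 2) (Fin 2) ℂ) :
    Matrix (Fin n → Fin 2) (Fin n → Fin 2) ℂ :=
  Matrix.of fun x y => ∏ i, M i (x i) (y i)

theorem pauliString_eq_kron {n : ℕ} (a : Fin n → Fin 4) :
    pauliString a = kron fun i => pauli (a i) := rfl

theorem kron_mul {n : ℕ} (M N : Fin n → Matrix (Fin 2) (Fin 2) ℂ) :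
    kron M * kron N = kron fun i => M i * N i := by
  ext x y
  simp only [kron, Matrix.mul_apply, Matrix.of_apply, Finset.prod_univ_sum,
    Fintype.piFinset_univ, Finset.prod_mul_distrib]

theorem trace_kron {n : ℕ} (M : Fin n → Matrix (Fin 2) (Fin 2) ℂ) :
    (kron M).trace = ∏ i, (M i).trace := by
  simp only [kron, Matrix.trace, Matrix.diag, Matrix.of_apply, Finset.prod_univ_sum,
    Fintype.piFinset_univ]

theorem trace_pauli {a : Fin 4} (ha : a ≠ 0) : (pauli a).trace = 0 := by
  fin_cases a <;> simp_all [pauli, Matrix.trace_fin_two]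

theorem trace_pauli_mul (a b : Fin 4) :
    (pauli a * pauli b).trace = if a = b then 2 else 0 := by
  fin_cases a <;> fin_cases b <;>
    simp [pauli, Matrix.trace_fin_two] <;> norm_num

theorem trace_pauliString_mul {n : ℕ} (a b : Fin n → Fin 4) :
    (pauliString a * pauliString b).trace = if a = b then (2 : ℂ) ^ n else 0 := by
  rw [pauliString_eq_kron, pauliString_eq_kron, kron_mul, trace_kron]
  simp only [trace_pauli_mul]
  split_ifs with h
  · simp [h]
  · obtain ⟨i, hi⟩ := Function.ne_iff.mp h
    exact Finset.prod_eq_zero (Finset.mem_univ i) (if_neg hi)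

theorem weightComponent_pauliString {n : ℕ} (b : Fin n → Fin 4) (w : ℕ) :
    weightComponent (pauliString b) w = if pauliWeight b = w then pauliString b else 0 := by
  simp only [weightComponent, trace_pauliString_mul, mul_ite, mul_zero, ite_smul, zero_smul,
    Finset.sum_ite_eq', Finset.mem_filter, Finset.mem_univ, true_and]
  simp

theorem weightComponent_zero {n : ℕ} (w : ℕ) :
    weightComponent (0 : Matrix (Fin n → Fin 2) (Fin n → Fin 2) ℂ) w = 0 := by
  simp [weightComponent]

theorem weightComponent_add {n : ℕ} (X Y : Matrix (Fin n → Fin 2) (Fin n → Fin 2) ℂ) (w : ℕ) :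
    weightComponent (X + Y) w = weightComponent X w + weightComponent Y w := by
  simp only [weightComponent, Matrix.trace_add, mul_add, add_smul,
    Finset.sum_add_distrib]

theorem weightComponent_smul {n : ℕ} (r : ℂ) (X : Matrix (Fin n → Fin 2) (Fin n → Fin 2) ℂ)
    (w : ℕ) : weightComponent (r • X) w = r • weightComponent X w := by
  simp only [weightComponent, Finset.smul_sum, smul_smul, Matrix.mul_smul, Matrix.trace_smul,
    smul_eq_mul]
  exact Finset.sum_congr rfl fun a _ => by congr 1; ring

theorem trace_pauliString_mul_mul {n : ℕ} (c a b : Fin n → Fin 4) :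
    (pauliString c * (pauliString a * pauliString b)).trace
      = ∏ i, (pauli (c i) * (pauli (a i) * pauli (b i))).trace := by
  simp only [pauliString_eq_kron, kron_mul, trace_kron]

/-- The trace of three Pauli letters depends on their order only if none of them is `σ₀`. -/
theorem ne_zero_of_trace_ne {x y z : Fin 4}
    (h : (pauli x * (pauli y * pauli z)).trace ≠ (pauli x * (pauli z * pauli y)).trace) :
    x ≠ 0 ∧ y ≠ 0 ∧ z ≠ 0 := by
  have h0 : pauli 0 = 1 := rfl
  refine ⟨?_, ?_, ?_⟩ <;> rintro rfl <;> apply h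
  · simpa [h0] using Matrix.trace_mul_comm (pauli y) (pauli z)
  · simp [h0]
  · simp [h0]

/-- A nonzero trace puts the support of `b` inside the union of the supports of `c` and `a`. -/
theorem support_of_trace_ne_zero {n : ℕ} {c a b : Fin n → Fin 4}
    (h : ∏ i, (pauli (c i) * (pauli (a i) * pauli (b i))).trace ≠ 0 ∨
      ∏ i, (pauli (c i) * (pauli (b i) * pauli (a i))).trace ≠ 0)
    (i : Fin n) (hb : b i ≠ 0) : a i ≠ 0 ∨ c i ≠ 0 := by
  have h0 : pauli 0 = 1 := rfl
  by_contra! hac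
  rcases h with h | h <;>
    exact h (Finset.prod_eq_zero (Finset.mem_univ i)
      (by simp [hac.1, hac.2, h0, trace_pauli hb]))

/-- A nonzero `Tr (P c [P a, P b])` makes the support of `b` nonempty and contained in the union of
the supports of `a` and `c`, which overlap in at least one site. -/
theorem weight_bound {n : ℕ} {c a b : Fin n → Fin 4}
    (h : (pauliString c * (pauliString a * pauliString b - pauliString b * pauliString a)).trace
      ≠ 0) :
    pauliWeight b + 1 ≤ pauliWeight a + pauliWeight c ∧ pauliWeight b ≠ 0 := by
  classical
  rw [Matrix.mul_sub, Matrix.trace_sub, trace_pauliString_mul_mul,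
    trace_pauliString_mul_mul, sub_ne_zero] at h
  obtain ⟨i, hi⟩ : ∃ i, (pauli (c i) * (pauli (a i) * pauli (b i))).trace
      ≠ (pauli (c i) * (pauli (b i) * pauli (a i))).trace := by
    by_contra! hall
    exact h (Finset.prod_congr rfl fun i _ => hall i)
  obtain ⟨hci, hai, hbi⟩ := ne_zero_of_trace_ne hi
  have hsupp := support_of_trace_ne_zero (c := c) (a := a) (b := b) (by
    by_contra! h2
    exact h (h2.1.trans h2.2.symm))
  unfold pauliWeight
  refine ⟨?_, Finset.card_ne_zero.mpr ⟨i, by simpa using hbi⟩⟩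
  -- The union of the supports contains that of `b`, and the intersection contains `i`.
  rw [← Finset.card_union_add_card_inter]
  refine Nat.add_le_add (Finset.card_le_card fun j hj => ?_)
    (Finset.card_pos.mpr ⟨i, by simp [hai, hci]⟩)
  simpa using hsupp j (by simpa using hj)


/-- Weight-2 component of the commutator (second equation of (29)): if `A` lies in the span
of Pauli strings of weight `1` or `2`, and `B` in the span of those of weight `0` or `≥ 3`,
then for every Pauli string `P c` of weight `2`,
`Tr (P c * [A, B]) = Tr (P c * [A₂, B₃])`. -/
theorem trace_pauliString_weight_two_commutator (n : ℕ) (hn : 1 ≤ n)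
    (A B : Matrix (Fin n → Fin 2) (Fin n → Fin 2) ℂ)
    (hA : A ∈ pauliSpan n {1, 2})
    (hB : B ∈ pauliSpan n ({0} ∪ {w | 3 ≤ w}))
    (c : Fin n → Fin 4) (hc : pauliWeight c = 2) :
    (pauliString c * (A * B - B * A)).trace
      = (pauliString c *
          (weightComponent A 2 * weightComponent B 3
            - weightComponent B 3 * weightComponent A 2)).trace := by
  induction hA using Submodule.span_induction with
  | zero => simp [weightComponent_zero]
  | add X Y _ _ hX hY =>
    rw [weightComponent_add]
    simp only [Matrix.add_mul, Matrix.mul_add, Matrix.mul_sub, Matrix.trace_add,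
      Matrix.trace_sub] at hX hY ⊢
    linear_combination hX + hY
  | smul r X _ hX =>
    rw [weightComponent_smul]
    simp only [Matrix.smul_mul, Matrix.mul_smul, ← smul_sub, Matrix.trace_smul, hX]
  | mem X hX =>
    obtain ⟨a, ha, rfl⟩ := hX
    induction hB using Submodule.span_induction with
    | zero => simp [weightComponent_zero]
    | add X Y _ _ hX hY =>
      rw [weightComponent_add]
      simp only [Matrix.add_mul, Matrix.mul_add, Matrix.mul_sub, Matrix.trace_add,
        Matrix.trace_sub] at hX hY ⊢
      linear_combination hX + hY
    | smul r X _ hX =>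
      rw [weightComponent_smul]
      simp only [Matrix.smul_mul, Matrix.mul_smul, ← smul_sub, Matrix.trace_smul, hX]
    | mem X hX =>
      obtain ⟨b, hb, rfl⟩ := hX
      rw [weightComponent_pauliString, weightComponent_pauliString]
      by_cases hab : pauliWeight a = 2 ∧ pauliWeight b = 3
      · simp [hab.1, hab.2]
      · have hL : (pauliString c *
            (pauliString a * pauliString b - pauliString b * pauliString a)).trace = 0 := by
          by_contra h
          have hw := weight_bound h
          simp only [Set.mem_insert_iff, Set.mem_singleton_iff, Set.mem_union,
            Set.mem_ofPred_eq] at ha hb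
          omega
        rw [hL]
        rcases not_and_or.mp hab with h | h <;> simp [h]
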